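/- Let m, n ∈ ℕ, let i ∈ {1, …, m} be an index and σ ∈ Bool a sign, let ξ : Bool → 𝔽₂ⁿ be any map, let ℓ ∈ 𝔽₂, and let A(ε) be a family of n×n matrices over 𝔽₂ indexed by sign vectors ε ∈ Bool^m. Define the family of (n+2)×(n+2) matrices A'(ε) = [[A(ε), 0, ξ(ε_i)], [0, 0, δ(ε_i = σ)], [ξ(¬ε_i)ᵀ, δ(ε_i = ¬σ), ℓ]]. Then for every finite set E ⊆ Bool^m of even cardinality, S^E(A') = 4·S^E(A). (This is the effect of a handle attachment move (T1) on generalized Seifert matrices.) -/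

import Mathlib

open Matrix

/-- The Gauss sum `S(A) = Σ_{x ∈ 𝔽₂ⁿ} (-1)^{xᵀAx}` of a square matrix over `𝔽₂`. -/
def matGaussSum {ι : Type*} [Fintype ι] [DecidableEq ι] (A : Matrix ι ι (ZMod 2)) : ℤ :=
  ∑ x : ι → ZMod 2, if x ⬝ᵥ A.mulVec x = 0 then 1 else -1

/-- The Gauss sum `S^E(A)` of the sum `A^E = Σ_{ε ∈ E} A(ε)` of a family of matrices over
`𝔽₂` indexed by sign vectors. -/
def famGaussSum {m : ℕ} {ι : Type*} [Fintype ι] [DecidableEq ι]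
    (E : Finset (Fin m → Bool)) (A : (Fin m → Bool) → Matrix ι ι (ZMod 2)) : ℤ :=
  matGaussSum (∑ ε ∈ E, A ε)

/-!
A block matrix `[[P, Q], [Qᵀ, R]]` over `𝔽₂` has the quadratic form `(u, v) ↦ uᵀPu + vᵀRv`, because
the two cross terms are equal and cancel, so its Gauss sum is the product of those of `P` and `R`.
For `E` of even cardinality, `A'^E` has this shape: for every map `f` out of `Bool`, the sums of
`f (ε_i)` and `f (¬ε_i)` over `E` differ by `|E| • (f true + f false) = 0`. Applied to `ξ`, this
says that the off-diagonal blocks are transposes of each other; applied to `δ(· = σ)`, that the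
corner is `[[0, a], [a, 0]]`, whose quadratic form `2axy` vanishes on all four vectors of `𝔽₂²`.
-/

section BlockMatrix

variable {α ι κ R : Type*}

theorem sum_fromBlocks {ι' κ' : Type*} [AddCommMonoid R] (E : Finset α)
    (A : α → Matrix ι ι' R) (B : α → Matrix ι κ' R)
    (C : α → Matrix κ ι' R) (D : α → Matrix κ κ' R) :
    ∑ e ∈ E, fromBlocks (A e) (B e) (C e) (D e) =
      fromBlocks (∑ e ∈ E, A e) (∑ e ∈ E, B e) (∑ e ∈ E, C e) (∑ e ∈ E, D e) := by
  ext (j | j) (k | k) <;> simp [Matrix.sum_apply]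

theorem sumElim_dotProduct_fromBlocks_transpose_mulVec [Fintype ι] [Fintype κ] [CommRing R]
    [CharP R 2] (A : Matrix ι ι R) (B : Matrix ι κ R) (D : Matrix κ κ R) (u : ι → R) (v : κ → R) :
    Sum.elim u v ⬝ᵥ fromBlocks A B Bᵀ D *ᵥ Sum.elim u v = u ⬝ᵥ A *ᵥ u + v ⬝ᵥ D *ᵥ v := by
  have cross_terms_eq : v ⬝ᵥ Bᵀ *ᵥ u = u ⬝ᵥ B *ᵥ v := by
    rw [mulVec_transpose, dotProduct_comm, dotProduct_mulVec]
  calc Sum.elim u v ⬝ᵥ fromBlocks A B Bᵀ D *ᵥ Sum.elim u v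
      = u ⬝ᵥ A *ᵥ u + (u ⬝ᵥ B *ᵥ v + v ⬝ᵥ Bᵀ *ᵥ u) + v ⬝ᵥ D *ᵥ v := by
        simp only [fromBlocks_mulVec, Sum.elim_comp_inl, Sum.elim_comp_inr,
          sumElim_dotProduct_sumElim, dotProduct_add]
        ring
    _ = u ⬝ᵥ A *ᵥ u + v ⬝ᵥ D *ᵥ v := by
        rw [cross_terms_eq, CharTwo.add_self_eq_zero, add_zero]

end BlockMatrix

section GaussSum

variable {ι κ : Type*} [Fintype ι] [DecidableEq ι] [Fintype κ] [DecidableEq κ]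

theorem ite_add_eq_zero_eq_mul (a b : ZMod 2) :
    (if a + b = 0 then 1 else -1 : ℤ) =
      (if a = 0 then 1 else -1) * (if b = 0 then 1 else -1) := by
  decide +revert

theorem matGaussSum_fromBlocks_transpose (A : Matrix ι ι (ZMod 2)) (B : Matrix ι κ (ZMod 2))
    (D : Matrix κ κ (ZMod 2)) :
    matGaussSum (fromBlocks A B Bᵀ D) = matGaussSum A * matGaussSum D := by
  unfold matGaussSum
  rw [Fintype.sum_mul_sum, ← Fintype.sum_prod_type',
    ← (Equiv.sumArrowEquivProdArrow ι κ (ZMod 2)).symm.sum_comp]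
  refine Fintype.sum_congr _ _ fun ⟨u, v⟩ => ?_
  rw [← ite_add_eq_zero_eq_mul, ← sumElim_dotProduct_fromBlocks_transpose_mulVec A B D u v]
  rfl

theorem matGaussSum_eq_two_pow_card {D : Matrix κ κ (ZMod 2)} (hD : ∀ v, v ⬝ᵥ D *ᵥ v = 0) :
    matGaussSum D = 2 ^ Fintype.card κ := by
  simp [matGaussSum, hD]

theorem matGaussSum_antidiag_fin_two (a : ZMod 2) : matGaussSum !![0, a; a, 0] = 4 := by
  have form_eq_zero (v : Fin 2 → ZMod 2) : v ⬝ᵥ !![0, a; a, 0] *ᵥ v = 0 := by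
    calc v ⬝ᵥ !![0, a; a, 0] *ᵥ v
        = v 0 * a * v 1 + v 0 * a * v 1 := by
          simp only [dotProduct, mulVec, Fin.sum_univ_two, of_apply, cons_val', cons_val_zero,
            cons_val_one, cons_val_fin_one, zero_mul, zero_add, add_zero]
          ring
      _ = 0 := CharTwo.add_self_eq_zero _
  simpa using matGaussSum_eq_two_pow_card form_eq_zero

end GaussSum

section EvenSum

variable {α M : Type*} [AddCommGroup M] [Module (ZMod 2) M] {E : Finset α}

theorem sum_const_eq_zero_of_even_card (hE : Even E.card) (x : M) : ∑ _e ∈ E, x = 0 := by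
  obtain ⟨k, hk⟩ := hE
  rw [Finset.sum_const, hk, add_nsmul, ZModModule.add_self]

theorem sum_comp_not_eq_sum_of_even_card (hE : Even E.card) (s : α → Bool) (f : Bool → M) :
    ∑ e ∈ E, f (!s e) = ∑ e ∈ E, f (s e) := by
  have add_eq_const (b : Bool) : f (!b) + f b = f true + f false := by
    cases b
    · rfl
    · exact add_comm _ _
  rw [← sub_eq_zero, ZModModule.sub_eq_add, ← Finset.sum_add_distrib]
  simp only [add_eq_const]
  exact sum_const_eq_zero_of_even_card hE _

end EvenSum

section HandleAttachment

variable {α ι : Type*} {E : Finset α}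

theorem sum_handle_row_eq_transpose_sum_handle_column (hE : Even E.card) (s : α → Bool)
    (ξ : Bool → ι → ZMod 2) :
    ∑ e ∈ E, Matrix.of (fun (k : Fin 2) x => ![(0 : ZMod 2), ξ (!s e) x] k) =
      (∑ e ∈ E, Matrix.of fun x (k : Fin 2) => ![(0 : ZMod 2), ξ (s e) x] k)ᵀ := by
  rw [transpose_sum]
  exact sum_comp_not_eq_sum_of_even_card hE s
    fun b => Matrix.of fun (k : Fin 2) x => ![(0 : ZMod 2), ξ b x] k

theorem sum_handle_corner (hE : Even E.card) (s : α → Bool) (σ : Bool) (l : ZMod 2) :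
    ∑ e ∈ E, !![0, if s e = σ then 1 else 0; if s e = !σ then 1 else 0, l] =
      !![0, ∑ e ∈ E, if s e = σ then 1 else 0; ∑ e ∈ E, if s e = σ then 1 else 0, 0] := by
  have lower_left_eq : (∑ e ∈ E, if s e = !σ then 1 else 0 : ZMod 2) =
      ∑ e ∈ E, if s e = σ then 1 else 0 := by
    simpa only [Bool.not_eq_eq_eq_not] using
      sum_comp_not_eq_sum_of_even_card hE s fun b => if b = σ then (1 : ZMod 2) else 0
  have lower_right_eq_zero : ∑ _e ∈ E, l = 0 := sum_const_eq_zero_of_even_card hE l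
  calc ∑ e ∈ E, !![0, if s e = σ then 1 else 0; if s e = !σ then 1 else 0, l]
      = !![0, ∑ e ∈ E, if s e = σ then 1 else 0;
           ∑ e ∈ E, if s e = !σ then 1 else 0, ∑ _e ∈ E, l] := by
        ext j k
        fin_cases j <;> fin_cases k <;> simp [Matrix.sum_apply]
    _ = !![0, ∑ e ∈ E, if s e = σ then 1 else 0; ∑ e ∈ E, if s e = σ then 1 else 0, 0] := by
        rw [lower_left_eq, lower_right_eq_zero]

theorem stmt16_general [Fintype ι] [DecidableEq ι] (hE : Even E.card) (s : α → Bool) (σ : Bool)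
    (ξ : Bool → ι → ZMod 2) (l : ZMod 2) (A : α → Matrix ι ι (ZMod 2)) :
    matGaussSum (∑ e ∈ E,
        Matrix.fromBlocks (A e)
          (Matrix.of fun x (k : Fin 2) => ![(0 : ZMod 2), ξ (s e) x] k)
          (Matrix.of fun (k : Fin 2) x => ![(0 : ZMod 2), ξ (!s e) x] k)
          !![0, if s e = σ then 1 else 0;
             if s e = !σ then 1 else 0, l])
      = 4 * matGaussSum (∑ e ∈ E, A e) := by
  rw [sum_fromBlocks, sum_handle_row_eq_transpose_sum_handle_column hE, sum_handle_corner hE,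
    matGaussSum_fromBlocks_transpose, matGaussSum_antidiag_fin_two, mul_comm]

end HandleAttachment

/-- Effect of a handle attachment move (T1) on generalized Seifert matrices: passing from
`A(ε)` to `A'(ε) = [[A(ε), 0, ξ(ε_i)], [0, 0, δ(ε_i = σ)], [ξ(¬ε_i)ᵀ, δ(ε_i = ¬σ), ℓ]]`
multiplies the Gauss sum `S^E` by `4`, for every finite `E` of even cardinality. -/
theorem stmt16 (m n : ℕ) (i : Fin m) (σ : Bool)
    (ξ : Bool → Fin n → ZMod 2) (l : ZMod 2)
    (A : (Fin m → Bool) → Matrix (Fin n) (Fin n) (ZMod 2)) :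
    ∀ E : Finset (Fin m → Bool), Even E.card →
      famGaussSum E (fun ε =>
        Matrix.fromBlocks (A ε)
          (Matrix.of fun x (k : Fin 2) => ![(0 : ZMod 2), ξ (ε i) x] k)
          (Matrix.of fun (k : Fin 2) x => ![(0 : ZMod 2), ξ (!(ε i)) x] k)
          !![0, if ε i = σ then 1 else 0;
             if ε i = !σ then 1 else 0, l])
        = 4 * famGaussSum E A := by
  intro E hE
  exact stmt16_general hE (fun ε => ε i) σ ξ l A
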